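/- Let σ be the ℚ-algebra automorphism of the polynomial ring ℚ[x₁, x₂, x₃] that cyclically permutes the variables (x₁ ↦ x₂ ↦ x₃ ↦ x₁), giving an action of the cyclic group ℤ/3 on ℚ[x₁, x₂, x₃]. Then the ring of invariants ℚ[x₁, x₂, x₃]^{ℤ/3} is not a polynomial ring: for no m ≥ 0 is it isomorphic as a ℚ-algebra to a polynomial ring ℚ[y₁, …, y_m] in m variables. -/

import Mathlib

open MvPolynomial

abbrev CycP := MvPolynomial (Fin 3) ℚ

noncomputable def cycD1 (i : Fin 3) : CycP →ₗ[ℚ] ℚ :=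
  (MvPolynomial.lcoeff ℚ (0 : Fin 3 →₀ ℕ)) ∘ₗ (pderiv i : Derivation ℚ CycP CycP).toLinearMap

noncomputable def cycD2 (i j : Fin 3) : CycP →ₗ[ℚ] ℚ :=
  cycD1 i ∘ₗ (pderiv j : Derivation ℚ CycP CycP).toLinearMap

noncomputable def cycD3 (i j k : Fin 3) : CycP →ₗ[ℚ] ℚ :=
  cycD2 i j ∘ₗ (pderiv k : Derivation ℚ CycP CycP).toLinearMap

lemma cycD1_apply (i : Fin 3) (f : CycP) : cycD1 i f = constantCoeff (pderiv i f) := rfl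
lemma cycD2_apply (i j : Fin 3) (f : CycP) :
    cycD2 i j f = constantCoeff (pderiv i (pderiv j f)) := rfl
lemma cycD3_apply (i j k : Fin 3) (f : CycP) :
    cycD3 i j k f = constantCoeff (pderiv i (pderiv j (pderiv k f))) := rfl

noncomputable def cycE : Fin 4 → (CycP →ₗ[ℚ] ℚ) :=
  ![cycD1 0, cycD2 0 0 - cycD2 0 1, cycD3 0 0 1 - cycD3 0 0 2,
    (-2 : ℚ) • cycD3 0 0 0 + (3 : ℚ) • cycD3 0 0 1 + (3 : ℚ) • cycD3 0 0 2
      - (4 : ℚ) • cycD3 0 1 2]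

lemma cyc_inv1 {f : CycP} (hf : rename (finRotate 3) f = f) (i : Fin 3) :
    constantCoeff (pderiv (finRotate 3 i) f) = constantCoeff (pderiv i f) := by
  conv_lhs => rw [← hf, pderiv_rename (finRotate 3).injective]
  rw [constantCoeff_rename]

lemma cyc_inv2 {f : CycP} (hf : rename (finRotate 3) f = f) (i j : Fin 3) :
    constantCoeff (pderiv (finRotate 3 i) (pderiv (finRotate 3 j) f))
      = constantCoeff (pderiv i (pderiv j f)) := by
  conv_lhs => rw [← hf, pderiv_rename (finRotate 3).injective,
    pderiv_rename (finRotate 3).injective]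
  rw [constantCoeff_rename]

lemma cyc_comm (i j : Fin 3) (f : CycP) : pderiv i (pderiv j f) = pderiv j (pderiv i f) := by
  have h : ⁅(pderiv i : Derivation ℚ CycP CycP), (pderiv j : Derivation ℚ CycP CycP)⁆ = 0 := by
    apply MvPolynomial.derivation_ext
    intro k
    simp only [Derivation.commutator_apply, pderiv_X, Pi.single_apply]
    split_ifs <;> simp
  have := congrArg (fun D => D f) h
  simpa [Derivation.commutator_apply, sub_eq_zero] using this

lemma cycE_mul {f g : CycP} (hf : rename (finRotate 3) f = f) (hg : rename (finRotate 3) g = g)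
    (k : Fin 4) :
    cycE k (f * g) = constantCoeff f * cycE k g + constantCoeff g * cycE k f := by
  have r0 : finRotate 3 0 = 1 := by decide
  have r1 : finRotate 3 1 = 2 := by decide
  have r2 : finRotate 3 2 = 0 := by decide
  have key : ∀ {f : CycP}, rename (finRotate 3) f = f →
      constantCoeff (pderiv 1 f) = constantCoeff (pderiv 0 f) ∧
      constantCoeff (pderiv 2 f) = constantCoeff (pderiv 0 f) ∧
      constantCoeff (pderiv 1 (pderiv 2 f)) = constantCoeff (pderiv 0 (pderiv 1 f)) ∧
      constantCoeff (pderiv 0 (pderiv 2 f)) = constantCoeff (pderiv 0 (pderiv 1 f)) := by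
    intro f hf
    have a := cyc_inv1 hf 0
    have b := cyc_inv1 hf 1
    have c := cyc_inv2 hf 0 1
    have d := cyc_inv2 hf 1 2
    simp only [r0, r1, r2] at a b c d
    refine ⟨a, b.trans a, c, ?_⟩
    rw [cyc_comm 0 2, ← c, ← d, cyc_comm 2 0]
  obtain ⟨a1, a2, a3, a4⟩ := key hf
  obtain ⟨b1, b2, b3, b4⟩ := key hg
  fin_cases k <;>
  simp [cycE, cycD1_apply, cycD2_apply, cycD3_apply, Derivation.leibniz, a1, a2, a3, a4, b1, b2,
    b3, b4] <;> ring

lemma cyc_point {m : ℕ} (L : MvPolynomial (Fin m) ℚ →ₗ[ℚ] ℚ) (ε : MvPolynomial (Fin m) ℚ →+* ℚ)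
    (hL : ∀ p q, L (p * q) = ε p * L q + ε q * L p) (hX : ∀ i, L (X i) = 0) (p) : L p = 0 := by
  have h1 : L 1 = 0 := by
    have := hL 1 1
    simp at this
    exact this
  induction p using MvPolynomial.induction_on with
  | C a =>
    have : (C a : MvPolynomial (Fin m) ℚ) = a • 1 := by rw [smul_eq_C_mul, mul_one]
    rw [this, map_smul, h1, smul_zero]
  | add p q hp hq => rw [map_add, hp, hq, add_zero]
  | mul_X p i hp => rw [hL, hX, hp]; simp

/-- Let `σ` be the `ℚ`-algebra automorphism of `ℚ[x₁,x₂,x₃]` cyclically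
permuting the variables (`x₁ ↦ x₂ ↦ x₃ ↦ x₁`), generating an action of `ℤ/3`.  The ring of
invariants (the fixed subalgebra of `σ`) is not a polynomial ring: it is not isomorphic as
a `ℚ`-algebra to `ℚ[y₁,…,y_m]` for any `m`. -/
theorem cyclic_invariants_not_polynomial :
    ¬ ∃ m : ℕ, Nonempty
      ((AlgHom.equalizer
          (MvPolynomial.rename (R := ℚ) ⇑(finRotate 3))
          (AlgHom.id ℚ (MvPolynomial (Fin 3) ℚ))) ≃ₐ[ℚ] MvPolynomial (Fin m) ℚ) := by
  rintro ⟨m, ⟨e⟩⟩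
  set S := AlgHom.equalizer (MvPolynomial.rename (R := ℚ) ⇑(finRotate 3))
          (AlgHom.id ℚ (MvPolynomial (Fin 3) ℚ)) with hS
  have hmem : ∀ x : S, rename (finRotate 3) (x : CycP) = x := fun x => x.2
  let φ : MvPolynomial (Fin m) ℚ →ₐ[ℚ] CycP := S.val.comp e.symm.toAlgHom
  have hφ : Function.Injective φ := Subtype.val_injective.comp e.symm.injective
  have hφi : ∀ p, rename (finRotate 3) (φ p) = φ p := fun p => hmem (e.symm p)
  have hm : m ≤ 3 := by
    have := _root_.trdeg_le_of_injective φ hφ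
    simpa [MvPolynomial.trdeg_of_isDomain] using this
  let F : (Fin 4 → ℚ) →ₗ[ℚ] (Fin m → ℚ) :=
    { toFun := fun c i => ∑ k, c k * cycE k (φ (X i))
      map_add' := by intro c d; ext i; simp [add_mul, Finset.sum_add_distrib]
      map_smul' := by intro c d; ext i; simp [mul_assoc, Finset.mul_sum] }
  have hF : LinearMap.ker F ≠ ⊥ := LinearMap.ker_ne_bot_of_finrank_lt (by simp; omega)
  obtain ⟨c, hc, hc0⟩ := (Submodule.ne_bot_iff _).1 hF
  apply hc0
  have hcX : ∀ i, ∑ k, c k * cycE k (φ (X i)) = 0 := fun i =>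
    congrFun (LinearMap.mem_ker.1 hc) i
  have hz : ∀ p, (∑ k, c k • cycE k) (φ p) = 0 := by
    refine cyc_point ((∑ k, c k • cycE k) ∘ₗ φ.toLinearMap)
      ((constantCoeff).comp φ.toRingHom) ?_ ?_
    · intro p q
      simp [cycE_mul (hφi p) (hφi q), Finset.sum_add_distrib, mul_add, Finset.mul_sum,
        mul_left_comm]
    · intro i
      simpa using hcX i
  have hz' : ∀ f : CycP, rename (finRotate 3) f = f → ∑ k, c k * cycE k f = 0 := by
    intro f hf
    have := hz (e ⟨f, hf⟩)
    simpa [φ] using this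
  have r0 : finRotate 3 0 = 1 := by decide
  have r1 : finRotate 3 1 = 2 := by decide
  have r2 : finRotate 3 2 = 0 := by decide
  have t1 := hz' (X 0 + X 1 + X 2) (by simp only [map_add, rename_X, r0, r1, r2]; ring)
  have t2 := hz' (X 0 * X 0 + X 1 * X 1 + X 2 * X 2)
    (by simp only [map_add, map_mul, rename_X, r0, r1, r2]; ring)
  have t3 := hz' (X 0 * X 0 * X 0 + X 1 * X 1 * X 1 + X 2 * X 2 * X 2)
    (by simp only [map_add, map_mul, rename_X, r0, r1, r2]; ring)
  have t4 := hz' (X 0 * X 0 * X 1 + X 1 * X 1 * X 2 + X 2 * X 2 * X 0)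
    (by simp only [map_add, map_mul, rename_X, r0, r1, r2]; ring)
  simp [Fin.sum_univ_four, cycE, cycD1_apply, cycD2_apply, cycD3_apply, Derivation.leibniz,
    pderiv_X] at t1 t2 t3 t4
  norm_num at t3
  ext k
  fin_cases k <;> simp <;> linarith
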